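/- Consider a normal form game with nonempty player set N, strategy sets S_i and real-valued payoff functions u_i : ∏_j S_j → ℝ. Assume that for every i ∈ N: (1) S_i is a nonempty lattice equipped with a topology τ_i that is finer than the interval topology on S_i and is compact; (2) for every s_{-i} ∈ S_{-i}, the section u_i(·, s_{-i}) : S_i → ℝ is upper semicontinuous with respect to τ_i; (3) for every s_{-i} ∈ S_{-i}, the section u_i(·, s_{-i}) is supermodular, i.e., u_i(a, s_{-i}) + u_i(b, s_{-i}) ≤ u_i(a ⊓ b, s_{-i}) + u_i(a ⊔ b, s_{-i}) for all a, b ∈ S_i; (4) u_i has increasing differences in S_i and S_{-i}, i.e., for all a ≤ a' in S_i and t ≤ t' in S_{-i} (product order), u_i(a', t) − u_i(a, t) ≤ u_i(a', t') − u_i(a, t'). Then the set E of Nash equilibria is nonempty and is a complete lattice in the order induced from the product order on ∏_j S_j: every subset A ⊆ E has a least upper bound in E and a greatest lower bound in E. -/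

import Mathlib

open Classical in
/-- Combine a strategy `a` of player `i` with a joint strategy `t` of the other players
into a joint strategy of all players. -/
noncomputable def combine {N : Type*} {S : N → Type*} (i : N) (a : S i)
    (t : ∀ j : {j : N // j ≠ i}, S j.1) : ∀ j, S j :=
  fun j => if h : j = i then cast (congrArg S h.symm) a else t ⟨j, h⟩

/-- A joint strategy `x` is a Nash equilibrium: no player `i` can improve the payoff
`u i x` by a unilateral deviation `y`. -/
def IsNashEquilibrium {N : Type*} {S : N → Type*}
    (u : ∀ _ : N, (∀ j, S j) → ℝ) (x : ∀ j, S j) : Prop :=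
  ∀ i, ∀ y : S i, u i (combine i y (fun j => x j.1)) ≤ u i x

/-- The interval topology on a poset: closed sets are generated by the closed rays
`{x | x ≤ a}` and `{x | a ≤ x}`, i.e., the topology is generated by their complements. -/
def intervalTopology (P : Type*) [Preorder P] : TopologicalSpace P :=
  TopologicalSpace.generateFrom
    ({s | ∃ a : P, s = {x | x ≤ a}ᶜ} ∪ {s | ∃ a : P, s = {x | a ≤ x}ᶜ})

theorem lub_aux {α : Type*} [Lattice α] [TopologicalSpace α] [CompactSpace α]
    (h1 : ∀ a : α, IsClosed {x | x ≤ a}) (h2 : ∀ a : α, IsClosed {x | a ≤ x})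
    (C : Set α) (hC : IsClosed C) (hs : ∀ a ∈ C, ∀ b ∈ C, a ⊔ b ∈ C)
    (A : Set α) (hAC : A ⊆ C) (hA : A.Nonempty) : ∃ s ∈ C, IsLUB A s := by
  classical
  let t : A ⊕ upperBounds A → Set α :=
    Sum.elim (fun a => {x | a.1 ≤ x}) (fun b => {x | x ≤ b.1})
  have key := hC.isCompact.inter_iInter_nonempty t
    (by rintro (a | b)
        · exact h2 _
        · exact h1 _)
    (by
      intro F
      have : ∃ x ∈ C, (∀ b ∈ upperBounds A, x ≤ b) ∧ ∀ a : A, Sum.inl a ∈ F → a.1 ≤ x := by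
        induction F using Finset.induction_on with
        | empty =>
          obtain ⟨a, ha⟩ := hA
          exact ⟨a, hAC ha, fun b hb => hb ha, by simp⟩
        | insert k F _ ih =>
          obtain ⟨x, hx, hxb, hxa⟩ := ih
          rcases k with a | b
          · refine ⟨x ⊔ a.1, hs _ hx _ (hAC a.2), fun b hb => sup_le (hxb b hb) (hb a.2), ?_⟩
            intro c hc
            rcases Finset.mem_insert.1 hc with h | h
            · cases h
              exact le_sup_right
            · exact (hxa c h).trans le_sup_left
          · refine ⟨x, hx, hxb, fun c hc => ?_⟩
            rcases Finset.mem_insert.1 hc with h | h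
            · cases h
            · exact hxa c h
      obtain ⟨x, hx, hxb, hxa⟩ := this
      refine ⟨x, hx, ?_⟩
      simp only [Set.mem_iInter]
      rintro (a | b) hk
      · exact hxa a hk
      · exact hxb b.1 b.2)
  obtain ⟨x, hx, hxt⟩ := key
  rw [Set.mem_iInter] at hxt
  exact ⟨x, hx, fun a ha => hxt (Sum.inl ⟨a, ha⟩), fun b hb => hxt (Sum.inr ⟨b, hb⟩)⟩

theorem glb_aux {α : Type*} [Lattice α] [τ : TopologicalSpace α] [hc : CompactSpace α]
    (h1 : ∀ a : α, IsClosed {x | x ≤ a}) (h2 : ∀ a : α, IsClosed {x | a ≤ x})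
    (C : Set α) (hC : IsClosed C) (hs : ∀ a ∈ C, ∀ b ∈ C, a ⊓ b ∈ C)
    (A : Set α) (hAC : A ⊆ C) (hA : A.Nonempty) : ∃ s ∈ C, IsGLB A s :=
  @lub_aux αᵒᵈ _ τ hc h2 h1 C hC hs A hAC hA

theorem max_aux {α : Type*} [TopologicalSpace α] [CompactSpace α] [Nonempty α]
    (g : α → ℝ) (hg : ∀ r : ℝ, IsClosed {a | r ≤ g a}) : ∃ a, ∀ b, g b ≤ g a := by
  classical
  have key := isCompact_univ.inter_iInter_nonempty (fun b : α => {a | g b ≤ g a})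
    (fun b => hg _)
    (by
      intro F
      rcases F.eq_empty_or_nonempty with rfl | h
      · simp
      · obtain ⟨x, _, hx⟩ := F.exists_max_image g h
        refine ⟨x, trivial, ?_⟩
        simpa using hx)
  obtain ⟨x, _, hx⟩ := key
  rw [Set.mem_iInter] at hx
  exact ⟨x, hx⟩

theorem combine_self_aux {N : Type*} {S : N → Type*} (i : N) (x : ∀ j, S j) :
    combine i (x i) (fun j => x j.1) = x := by
  funext j
  unfold combine
  split_ifs with h
  · subst h
    rfl
  · rfl

/-- Corollary 4.12 (Zhou's theorem): for a normal form game with real-valued payoffs,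
if every strategy lattice carries a compact topology finer than its interval topology,
every section of a payoff function is upper semicontinuous and supermodular, and the
payoff functions have increasing differences, then the Nash equilibria form a nonempty
complete lattice: every set of Nash equilibria has a least upper bound and a greatest
lower bound among the Nash equilibria. -/
theorem zhou_nashEquilibria_nonempty_completeLattice {N : Type*} [Nonempty N]
    {S : N → Type*} [∀ i, Lattice (S i)] [∀ i, Nonempty (S i)]
    (τ : ∀ i, TopologicalSpace (S i))
    (hfiner : ∀ i, τ i ≤ intervalTopology (S i))
    (hcompact : ∀ i, @CompactSpace (S i) (τ i))
    (u : ∀ _ : N, (∀ j, S j) → ℝ)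
    (husc : ∀ i, ∀ t : ∀ j : {j : N // j ≠ i}, S j.1, ∀ r : ℝ,
      @IsClosed (S i) (τ i) {a : S i | r ≤ u i (combine i a t)})
    (hsm : ∀ i, ∀ t : ∀ j : {j : N // j ≠ i}, S j.1, ∀ a b : S i,
      u i (combine i a t) + u i (combine i b t) ≤
        u i (combine i (a ⊓ b) t) + u i (combine i (a ⊔ b) t))
    (hid : ∀ i, ∀ a a' : S i, a ≤ a' → ∀ t t' : (∀ j : {j : N // j ≠ i}, S j.1), t ≤ t' →
      u i (combine i a' t) - u i (combine i a t) ≤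
        u i (combine i a' t') - u i (combine i a t')) :
    (∃ x : ∀ j, S j, IsNashEquilibrium u x) ∧
    ∀ A : Set (∀ j, S j), (∀ x ∈ A, IsNashEquilibrium u x) →
      (∃ s : ∀ j, S j, IsNashEquilibrium u s ∧ (∀ x ∈ A, x ≤ s) ∧
        ∀ b : ∀ j, S j, IsNashEquilibrium u b → (∀ x ∈ A, x ≤ b) → s ≤ b) ∧
      (∃ m : ∀ j, S j, IsNashEquilibrium u m ∧ (∀ x ∈ A, m ≤ x) ∧
        ∀ b : ∀ j, S j, IsNashEquilibrium u b → (∀ x ∈ A, b ≤ x) → b ≤ m) := by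
  classical
  have h1 : ∀ i (a : S i), @IsClosed _ (τ i) {x | x ≤ a} := fun i a => by
    let _ := τ i
    exact isOpen_compl_iff.1 (hfiner i _ (TopologicalSpace.isOpen_generateFrom_of_mem
      (Or.inl ⟨a, rfl⟩)))
  have h2 : ∀ i (a : S i), @IsClosed _ (τ i) {x | a ≤ x} := fun i a => by
    let _ := τ i
    exact isOpen_compl_iff.1 (hfiner i _ (TopologicalSpace.isOpen_generateFrom_of_mem
      (Or.inr ⟨a, rfl⟩)))
  have glbS : ∀ i (A : Set (S i)), A.Nonempty → ∃ s, IsGLB A s := fun i A hA => by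
    let _ := τ i
    have := hcompact i
    obtain ⟨s, _, hs⟩ := glb_aux (h1 i) (h2 i) Set.univ isClosed_univ (by simp) A (by simp) hA
    exact ⟨s, hs⟩
  have lubS : ∀ i (A : Set (S i)), ∃ s, IsLUB A s := fun i A => by
    let _ := τ i
    have := hcompact i
    rcases A.eq_empty_or_nonempty with rfl | hA
    · obtain ⟨s, hs⟩ := glbS i Set.univ Set.univ_nonempty
      exact ⟨s, by simp, fun b _ => hs.1 (Set.mem_univ b)⟩
    · obtain ⟨s, _, hs⟩ := lub_aux (h1 i) (h2 i) Set.univ isClosed_univ (by simp) A (by simp) hA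
      exact ⟨s, hs⟩
  let B : ∀ i, (∀ j, S j) → Set (S i) := fun i x =>
    {a | ∀ b, u i (combine i b (fun j => x j.1)) ≤ u i (combine i a (fun j => x j.1))}
  have hNash : ∀ x, IsNashEquilibrium u x ↔ ∀ i, x i ∈ B i x := by
    intro x
    refine forall_congr' fun i => ?_
    change _ ↔ ∀ b, _ ≤ u i (combine i (x i) (fun j => x j.1))
    rw [combine_self_aux]
  have hBcl : ∀ i x, @IsClosed _ (τ i) (B i x) := by
    intro i x
    let _ := τ i
    have : B i x = ⋂ b, {a | u i (combine i b (fun j => x j.1)) ≤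
        u i (combine i a (fun j => x j.1))} := by
      ext a
      simp [B]
    rw [this]
    exact isClosed_iInter fun b => husc i _ _
  have hBne : ∀ i x, (B i x).Nonempty := by
    intro i x
    let _ := τ i
    have := hcompact i
    exact max_aux (fun a => u i (combine i a (fun j => x j.1))) (fun r => husc i _ r)
  have hasc : ∀ i x y, x ≤ y → ∀ a ∈ B i x, ∀ b ∈ B i y, a ⊓ b ∈ B i x ∧ a ⊔ b ∈ B i y := by
    intro i x y hxy a ha b hb
    have e1 := hsm i (fun j => x j.1) a b
    have e2 := hid i b (a ⊔ b) le_sup_right (fun j => x j.1) (fun j => y j.1)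
      (fun j => hxy j.1)
    have e3 := ha (a ⊓ b)
    have e4 := hb (a ⊔ b)
    refine ⟨fun c => ?_, fun c => ?_⟩
    · have := ha c
      linarith
    · have := hb c
      linarith
  have main : ∀ A : Set (∀ j, S j), (∀ x ∈ A, IsNashEquilibrium u x) →
      (∃ s : ∀ j, S j, IsNashEquilibrium u s ∧ (∀ x ∈ A, x ≤ s) ∧
        ∀ b : ∀ j, S j, IsNashEquilibrium u b → (∀ x ∈ A, x ≤ b) → s ≤ b) := by
    intro A hA
    choose a ha using fun i => lubS i ((fun x => x i) '' A)
    have haA : ∀ x ∈ A, x ≤ a := fun x hx i => (ha i).1 ⟨x, hx, rfl⟩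
    have haU : ∀ b, (∀ x ∈ A, x ≤ b) → a ≤ b := by
      intro b hb i
      apply (ha i).2
      rintro _ ⟨x, hx, rfl⟩
      exact hb x hx i
    have hf : ∀ x i, ∃ z, a ≤ x → IsLeast (B i x ∩ {z | a i ≤ z}) z := by
      intro x i
      let _ := τ i
      have := hcompact i
      by_cases hx : a ≤ x
      swap
      · exact ⟨a i, fun h => absurd h hx⟩
      obtain ⟨M, hM, hMl⟩ := lub_aux (h1 i) (h2 i) (B i x) (hBcl i x)
        (fun c hc d hd => (hasc i x x le_rfl c hc d hd).2) (B i x) subset_rfl (hBne i x)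
      have haM : a i ≤ M := by
        apply (ha i).2
        rintro _ ⟨y, hy, rfl⟩
        have := (hasc i y x ((haA y hy).trans hx) (y i) ((hNash y).1 (hA y hy) i) M hM).2
        exact le_sup_left.trans (hMl.1 this)
      obtain ⟨z, hz, hzl⟩ := glb_aux (h1 i) (h2 i) (B i x ∩ {z | a i ≤ z})
        ((hBcl i x).inter (h2 i _))
        (fun c hc d hd => ⟨(hasc i x x le_rfl c hc.1 d hd.1).1, le_inf hc.2 hd.2⟩)
        _ subset_rfl ⟨M, hM, haM⟩
      exact ⟨z, fun _ => ⟨hz, hzl.1⟩⟩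
    choose f hf using hf
    have hmono : ∀ x y, a ≤ x → x ≤ y → f x ≤ f y := by
      intro x y hx hxy i
      have k1 := hf x i hx
      have k2 := hf y i (hx.trans hxy)
      exact (k1.2 ⟨(hasc i x y hxy _ k1.1.1 _ k2.1.1).1, le_inf k1.1.2 k2.1.2⟩).trans inf_le_right
    choose top htop using fun i => lubS i Set.univ
    have htop' : ∀ x, x ≤ top := fun x i => (htop i).1 trivial
    let T : Set (∀ j, S j) := {x | a ≤ x ∧ f x ≤ x}
    have hT : T.Nonempty := ⟨top, htop' _, htop' _⟩
    choose s hs using fun i => glbS i ((fun x => x i) '' T) (hT.image _)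
    have hsT : ∀ x ∈ T, s ≤ x := fun x hx i => (hs i).1 ⟨x, hx, rfl⟩
    have hsL : ∀ b, (∀ x ∈ T, b ≤ x) → b ≤ s := by
      intro b hb i
      apply (hs i).2
      rintro _ ⟨x, hx, rfl⟩
      exact hb x hx i
    have has : a ≤ s := hsL a fun x hx => hx.1
    have hfs : f s ≤ s := hsL _ fun x hx => (hmono s x has (hsT x hx)).trans hx.2
    have hafs : a ≤ f s := fun i => (hf s i has).1.2
    have hsf : s ≤ f s := hsT _ ⟨hafs, hmono _ _ hafs hfs⟩
    have heq : f s = s := le_antisymm hfs hsf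
    refine ⟨s, (hNash s).2 fun i => ?_, fun x hx => (haA x hx).trans has, fun b hb hbA => ?_⟩
    · have := (hf s i has).1.1
      rwa [heq] at this
    · have hab := haU b hbA
      exact hsT b ⟨hab, fun i => (hf b i hab).2 ⟨(hNash b).1 hb i, hab i⟩⟩
  refine ⟨?_, fun A hA => ⟨main A hA, ?_⟩⟩
  · obtain ⟨s, hs, _⟩ := main ∅ (by simp)
    exact ⟨s, hs⟩
  · obtain ⟨m, hm, hm1, hm2⟩ :=
      main {b | IsNashEquilibrium u b ∧ ∀ x ∈ A, b ≤ x} (fun x hx => hx.1)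
    exact ⟨m, hm, fun x hx => hm2 x (hA x hx) fun b hb => hb.2 x hx,
      fun b hb hbA => hm1 b ⟨hb, hbA⟩⟩
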